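/- arXiv:1905.06459 — 6 statements merged into one kernel-verified Lean document; each statement's English description precedes it below -/
import Mathlib

section
/- Let 2 ≤ ℓ < k and let H be an ℓ-covering k-hypergraph. Then H is quasi-eulerian if and only if H has at least two edges. -/
/-- A closed walk of length `k` in a hypergraph on vertex type `V` whose edges are
finite sets of vertices: an alternating sequence of vertices and edges such that
consecutive vertices are distinct and both lie in the interposed edge, and the
first vertex equals the last. -/
def IsClosedWalk {V : Type} (k : ℕ) (v : Fin (k + 1) → V) (e : Fin k → Finset V) : Prop :=
  v 0 = v (Fin.last k) ∧
    ∀ i : Fin k, v i.castSucc ≠ v i.succ ∧ v i.castSucc ∈ e i ∧ v i.succ ∈ e i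

/-- The multiset of edges traversed by a walk (with multiplicity). -/
def walkEdges {V : Type} {k : ℕ} (e : Fin k → Finset V) : Multiset (Finset V) :=
  Multiset.ofList (List.ofFn e)

/-- A hypergraph, given by its edge multiset `E` over vertex type `V`, is eulerian if it
admits a closed walk whose multiset of traversed edges is exactly `E`, i.e. a closed
strict trail traversing every edge exactly once (a trivial walk works iff `E = 0`,
matching the convention that a trivial walk is an Euler tour of an edgeless
hypergraph). -/
def IsEulerian {V : Type} (E : Multiset (Finset V)) : Prop :=
  ∃ (k : ℕ) (v : Fin (k + 1) → V) (e : Fin k → Finset V),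
    IsClosedWalk k v e ∧ walkEdges e = E

/-- An Euler family: a finite collection of nontrivial closed strict trails, pairwise
anchor-disjoint (no two trails traverse a common vertex), whose traversed edges jointly
form the edge multiset `E`, so every edge is traversed exactly once and the trails are
pairwise edge-disjoint. -/
def IsEulerFamily {V : Type} (E : Multiset (Finset V)) (n : ℕ) (len : Fin n → ℕ)
    (v : (i : Fin n) → Fin (len i + 1) → V)
    (e : (i : Fin n) → Fin (len i) → Finset V) : Prop :=
  (∀ i, 1 ≤ len i) ∧ (∀ i, IsClosedWalk (len i) (v i) (e i)) ∧
    (∀ i j, i ≠ j → ∀ a b, v i a ≠ v j b) ∧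
    (∑ i, walkEdges (e i)) = E

/-- A hypergraph is quasi-eulerian if it admits an Euler family. -/
def IsQuasiEulerian {V : Type} (E : Multiset (Finset V)) : Prop :=
  ∃ n len v e, IsEulerFamily E n len v e

/-- An `l`-covering `k`-hypergraph on vertex type `V`: a nonempty `k`-uniform edge
multiset such that every `l`-element subset of the vertex set is contained in at
least one edge. -/
def IsCoveringHypergraph {V : Type} [DecidableEq V] (E : Multiset (Finset V))
    (l k : ℕ) : Prop :=
  E ≠ 0 ∧ (∀ f ∈ E, f.card = k) ∧
    ∀ s : Finset V, s.card = l → ∃ f ∈ E, s ⊆ f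


inductive Tr {V : Type} : V → V → List (V × Finset V) → Prop
  | nil (a : V) : Tr a a []
  | cons {a b c : V} {f : Finset V} {L : List (V × Finset V)} :
      a ≠ b → a ∈ f → b ∈ f → Tr b c L → Tr a c ((a, f) :: L)

theorem Tr.append {V : Type} {a b c : V} {L L' : List (V × Finset V)} (h : Tr a b L)
    (h' : Tr b c L') : Tr a c (L ++ L') := by
  induction h with
  | nil a => exact h'
  | cons h1 h2 h3 _ ih => exact Tr.cons h1 h2 h3 (ih h')

theorem Tr.rev {V : Type} {a b : V} {L : List (V × Finset V)} (h : Tr a b L) :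
    ∃ L', Tr b a L' ∧ (L'.map Prod.snd).Perm (L.map Prod.snd) := by
  induction h with
  | nil a => exact ⟨[], Tr.nil a, List.Perm.refl _⟩
  | @cons a b c f L h1 h2 h3 _ ih =>
    obtain ⟨L', h4, h5⟩ := ih
    refine ⟨L' ++ [(b, f)], h4.append (Tr.cons h1.symm h3 h2 (Tr.nil _)), ?_⟩
    simp only [List.map_append, List.map_cons, List.map_nil]
    exact (List.perm_append_singleton _ _).trans (h5.cons f)

theorem Tr.split {V : Type} {a b x : V} {L1 L2 : List (V × Finset V)} {f : Finset V}
    (h : Tr a b (L1 ++ (x, f) :: L2)) : Tr a x L1 ∧ Tr x b ((x, f) :: L2) := by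
  induction L1 generalizing a with
  | nil =>
    simp only [List.nil_append] at h
    cases h with
    | cons h1 h2 h3 h4 => exact ⟨Tr.nil _, Tr.cons h1 h2 h3 h4⟩
  | cons p L ih =>
    simp only [List.cons_append] at h
    cases h with
    | cons h1 h2 h3 h4 =>
      obtain ⟨h5, h6⟩ := ih h4
      exact ⟨Tr.cons h1 h2 h3 h5, h6⟩

theorem Tr.rotate {V : Type} {a x : V} {L : List (V × Finset V)}
    (h : Tr a a L) (hx : x ∈ L.map Prod.fst) : ∃ L', Tr x x L' ∧ L'.Perm L := by
  simp only [List.mem_map] at hx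
  obtain ⟨⟨y, f⟩, hm, rfl⟩ := hx
  obtain ⟨L1, L2, rfl⟩ := List.append_of_mem hm
  obtain ⟨h1, h2⟩ := h.split
  exact ⟨_, h2.append h1, List.perm_append_comm⟩

/-- trails -/
abbrev TT (V : Type) := V × V × List (V × Finset V)

def TT.es {V : Type} (t : TT V) : Multiset (Finset V) := (↑(t.2.2.map Prod.snd))

open Classical in
noncomputable def TT.en {V : Type} (v : V) (t : TT V) : ℕ :=
  (if t.1 = v then 1 else 0) + (if t.2.1 = v then 1 else 0)

def Fam {V : Type} (E : Multiset (Finset V)) (F : Multiset (TT V)) : Prop :=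
  (∀ t ∈ F, Tr t.1 t.2.1 t.2.2 ∧ t.2.2 ≠ []) ∧ (F.map TT.es).sum = E ∧
    ∀ v, Even (F.map (TT.en v)).sum

def Good {V : Type} (F : Multiset (TT V)) : Prop :=
  (∀ t ∈ F, t.1 = t.2.1) ∧ ∀ s t R, F = s ::ₘ t ::ₘ R →
    ∀ x ∈ s.2.2.map Prod.fst, x ∉ t.2.2.map Prod.fst

theorem Fam.revhead {V : Type} {E : Multiset (Finset V)} {s : TT V} {R : Multiset (TT V)}
    (h : Fam E (s ::ₘ R)) : ∃ L, Fam E ((s.2.1, s.1, L) ::ₘ R) := by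
  obtain ⟨h1, h2, h3⟩ := h
  obtain ⟨L, hL, hp⟩ := (h1 s (by simp)).1.rev
  refine ⟨L, ?_, ?_, ?_⟩
  · intro t ht
    rw [Multiset.mem_cons] at ht
    rcases ht with rfl | ht
    · refine ⟨hL, ?_⟩
      have := (h1 s (by simp)).2
      intro h
      simp only at h
      rw [h] at hp
      simp at hp
      exact this hp
    · exact h1 t (by simp [ht])
  · rw [← h2]
    simp only [Multiset.map_cons, Multiset.sum_cons]
    congr 1
    simpa [TT.es] using hp
  · intro v
    have := h3 v
    simp only [Multiset.map_cons, Multiset.sum_cons] at this ⊢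
    convert this using 2
    simp only [TT.en]
    omega

theorem Fam.join {V : Type} {E : Multiset (Finset V)} {s t : TT V} {R : Multiset (TT V)}
    (h : Fam E (s ::ₘ t ::ₘ R)) (hst : s.2.1 = t.1) :
    Fam E ((s.1, t.2.1, s.2.2 ++ t.2.2) ::ₘ R) := by
  obtain ⟨h1, h2, h3⟩ := h
  have hs := h1 s (by simp)
  have ht := h1 t (by simp)
  refine ⟨?_, ?_, ?_⟩
  · intro r hr
    rw [Multiset.mem_cons] at hr
    rcases hr with rfl | hr
    · refine ⟨hs.1.append (hst ▸ ht.1), ?_⟩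
      simp [hs.2]
    · exact h1 r (by simp [hr])
  · rw [← h2]
    simp [TT.es, ← add_assoc]
  · intro v
    have := h3 v
    simp only [Multiset.map_cons, Multiset.sum_cons] at this ⊢
    obtain ⟨s1, s2, Ls⟩ := s
    obtain ⟨t1, t2, Lt⟩ := t
    simp only at hst
    subst hst
    classical
    have hen : TT.en v (s1, s2, Ls) + TT.en v (s2, t2, Lt) =
        TT.en v (s1, t2, Ls ++ Lt) + 2 * (if s2 = v then 1 else 0) := by
      simp only [TT.en]
      split_ifs <;> rfl
    rw [← add_assoc, hen] at this
    change Even (TT.en v (s1, t2, Ls ++ Lt) + _)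
    rw [Nat.even_iff] at this ⊢
    omega

theorem fam_good {V : Type} {E : Multiset (Finset V)} (n : ℕ) (F : Multiset (TT V))
    (hn : F.card = n) (h : Fam E F) : ∃ F', Fam E F' ∧ Good F' := by
  classical
  induction n using Nat.strong_induction_on generalizing F with
  | _ n ih =>
  by_cases hG : Good F
  · exact ⟨F, h, hG⟩
  · by_cases hcl : ∀ t ∈ F, t.1 = t.2.1
    swap
    · push Not at hcl
      obtain ⟨s, hs, hne⟩ := hcl
      obtain ⟨R, rfl⟩ := Multiset.exists_cons_of_mem hs
      have : ∃ t ∈ R, t.1 = s.2.1 ∨ t.2.1 = s.2.1 := by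
        by_contra hcon
        push Not at hcon
        have h3 := h.2.2 s.2.1
        have h0 : (R.map (TT.en s.2.1)).sum = 0 := by
          apply Multiset.sum_eq_zero
          intro x hx
          rw [Multiset.mem_map] at hx
          obtain ⟨t, ht, rfl⟩ := hx
          simp [TT.en, hcon t ht]
        rw [Multiset.map_cons, Multiset.sum_cons, h0] at h3
        simp [TT.en, hne] at h3
      obtain ⟨t, ht, hor⟩ := this
      obtain ⟨R, rfl⟩ := Multiset.exists_cons_of_mem ht
      simp only [Multiset.card_cons] at hn
      rcases hor with hor | hor
      · exact ih (R.card + 1) (by omega) _ (by simp) (h.join hor.symm)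
      · rw [Multiset.cons_swap] at h
        obtain ⟨L, hL⟩ := h.revhead
        rw [Multiset.cons_swap] at hL
        exact ih (R.card + 1) (by omega) _ (by simp) (hL.join hor.symm)
    have hG' : ¬ ∀ s t R, F = s ::ₘ t ::ₘ R →
        ∀ x ∈ s.2.2.map Prod.fst, x ∉ t.2.2.map Prod.fst := fun h => hG ⟨hcl, h⟩
    push Not at hG'
    obtain ⟨s, t, R, rfl, x, hxs, hxt⟩ := hG'
    have hs := h.1 s (by simp)
    have ht := h.1 t (by simp)
    have hs1 := hcl s (by simp)
    have ht1 := hcl t (by simp)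
    have hs2 := hs.1
    have ht2 := ht.1
    rw [← hs1] at hs2
    rw [← ht1] at ht2
    obtain ⟨Ls, hLs, hps⟩ := hs2.rotate hxs
    obtain ⟨Lt, hLt, hpt⟩ := ht2.rotate hxt
    simp only [Multiset.card_cons] at hn
    refine ih (R.card + 1) (by omega) ((x, x, Ls ++ Lt) ::ₘ R) (by simp) ⟨?_, ?_, ?_⟩
    · intro r hr
      rw [Multiset.mem_cons] at hr
      rcases hr with rfl | hr
      · refine ⟨hLs.append hLt, ?_⟩
        simp only [ne_eq, List.append_eq_nil_iff, not_and]
        rintro rfl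
        exact absurd hps.symm.eq_nil hs.2
      · exact h.1 r (by simp [hr])
    · rw [← h.2.1]
      have e1 : (↑(List.map Prod.snd Ls) : Multiset (Finset V)) = ↑(List.map Prod.snd s.2.2) :=
        Multiset.coe_eq_coe.mpr (hps.map _)
      have e2 : (↑(List.map Prod.snd Lt) : Multiset (Finset V)) = ↑(List.map Prod.snd t.2.2) :=
        Multiset.coe_eq_coe.mpr (hpt.map _)
      simp only [Multiset.map_cons, Multiset.sum_cons, TT.es, List.map_append,
        ← Multiset.coe_add, e1, e2, add_assoc]
    · intro v
      have := h.2.2 v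
      simp only [Multiset.map_cons, Multiset.sum_cons, TT.en, ← hs1, ← ht1] at this ⊢
      rw [Nat.even_iff] at this ⊢
      split_ifs at this ⊢ <;> omega

theorem Tr.closed {V : Type} {a b : V} {L : List (V × Finset V)} (h : Tr a b L) :
    ∃ v : Fin (L.length + 1) → V, v 0 = a ∧ v (Fin.last _) = b ∧
      (∀ i : Fin L.length, v i.castSucc = (L.get i).1) ∧
      ∀ i : Fin L.length, v i.castSucc ≠ v i.succ ∧ v i.castSucc ∈ (L.get i).2 ∧
        v i.succ ∈ (L.get i).2 := by
  induction h with
  | nil a => exact ⟨fun _ => a, rfl, rfl, fun i => i.elim0, fun i => i.elim0⟩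
  | @cons a b c f L h1 h2 h3 _ ih =>
    obtain ⟨v, hv0, hvl, hv1, hv2⟩ := ih
    refine ⟨Fin.cons a v, rfl, ?_, ?_, ?_⟩
    · rw [← hvl]; rfl
    · intro i
      refine Fin.cases ?_ (fun j => ?_) i
      · rfl
      · exact hv1 j
    · intro i
      refine Fin.cases ?_ (fun j => ?_) i
      · refine ⟨?_, h2, ?_⟩
        · change a ≠ v 0
          rw [hv0]; exact h1
        · change v 0 ∈ f
          rw [hv0]; exact h3
      · exact hv2 j

theorem fam_quasi {V : Type} {E : Multiset (Finset V)} (F : Multiset (TT V)) (h : Fam E F) :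
    IsQuasiEulerian E := by
  obtain ⟨F', h', hg⟩ := fam_good _ F rfl h
  obtain ⟨l, rfl⟩ : ∃ l : List (TT V), F' = (l : Multiset (TT V)) :=
    ⟨F'.toList, (Multiset.coe_toList F').symm⟩
  have hmem : ∀ i : Fin l.length, l.get i ∈ (l : Multiset (TT V)) :=
    fun i => Multiset.mem_coe.mpr (List.get_mem _ _)
  have hw := fun i => (h'.1 (l.get i) (hmem i)).1.closed
  choose v hv0 hvl hv1 hv2 using hw
  have hcl : ∀ i, v i 0 = v i (Fin.last _) := fun i => by
    rw [hv0, hvl]; exact hg.1 _ (hmem i)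
  have hpos : ∀ i : Fin l.length, 1 ≤ (l.get i).2.2.length := fun i =>
    List.length_pos_iff.mpr (h'.1 (l.get i) (hmem i)).2
  have hanc : ∀ i a, v i a ∈ (l.get i).2.2.map Prod.fst := by
    intro i
    have key : ∀ j : Fin (l.get i).2.2.length, v i j.castSucc ∈ (l.get i).2.2.map Prod.fst := by
      intro j
      rw [hv1]
      exact List.mem_map_of_mem (List.get_mem _ _)
    intro a
    refine Fin.lastCases ?_ key a
    rw [← hcl]
    exact key ⟨0, hpos i⟩
  refine ⟨l.length, fun i => (l.get i).2.2.length, v, fun i j => ((l.get i).2.2.get j).2,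
    hpos, fun i => ⟨hcl i, hv2 i⟩, ?_, ?_⟩
  · have key : ∀ i j : Fin l.length, i < j → ∀ a b, v i a ≠ v j b := by
      intro i j hij a b hab
      have hp : ∃ R : List (TT V), l.Perm (l.get i :: l.get j :: R) := by
        have h1 : [l.get i, l.get j].Sublist l := by
          have : List.Sublist (List.map l.get [i, j]) l := by
            apply List.map_getElem_sublist
            simpa using hij
          simpa using this
        obtain ⟨R, hR⟩ := h1.exists_perm_append
        exact ⟨R, hR⟩
      obtain ⟨R, hR⟩ := hp
      refine hg.2 (l.get i) (l.get j) R (Quot.sound hR) (v i a) (hanc i a) ?_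
      rw [hab]
      exact hanc j b
    intro i j hij a b
    rcases lt_or_gt_of_ne hij with h1 | h1
    · exact key i j h1 a b
    · exact (key j i h1 b a).symm
  · rw [← h'.2.1]
    rw [Multiset.map_coe, Multiset.sum_coe, ← List.sum_ofFn]
    congr 1
    conv_rhs => rw [← List.ofFn_get l]
    rw [List.map_ofFn]
    congr 1
    funext i
    simp only [Function.comp, TT.es, walkEdges]
    congr 1
    conv_rhs => rw [← List.ofFn_get (l.get i).2.2]
    rw [List.map_ofFn]
    rfl

theorem tutte_inv {N : Type} [Fintype N] (G : SimpleGraph N) (M : G.Subgraph)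
    (hM : M.IsPerfectMatching) :
    ∃ σ : N → N, (∀ x, σ (σ x) = x) ∧ ∀ x, G.Adj x (σ x) := by
  have h : ∀ x, ∃ y, M.Adj x y := fun x => (hM.1 (hM.2 x)).exists
  choose σ hσ using h
  refine ⟨σ, fun x => ?_, fun x => (hσ x).adj_sub⟩
  exact hM.1.eq_of_adj_left (hσ (σ x)) (hσ x).symm

theorem odd_parity {N : Type} [Fintype N] [DecidableEq N] (U : Finset N) (f : N → N)
    (hev : Even (Fintype.card N)) :
    Even (U.card + (Finset.univ.filter
        (fun c => Odd (Finset.univ.filter (fun x => x ∉ U ∧ f x = c)).card)).card) := by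
  have h1 := Finset.odd_sum_iff_odd_card_odd (s := Finset.univ)
    (fun c => (Finset.univ.filter (fun x => x ∉ U ∧ f x = c)).card)
  have h2 : ∑ c, (Finset.univ.filter (fun x => x ∉ U ∧ f x = c)).card = (Uᶜ).card := by
    rw [Finset.card_eq_sum_card_fiberwise (f := f) (t := Finset.univ) (by simp)]
    refine Finset.sum_congr rfl fun c _ => ?_
    congr 1
    ext x
    simp
  rw [h2] at h1
  have h3 := Finset.card_add_card_compl U
  rw [← h3] at hev
  rw [Nat.even_add] at hev ⊢
  rw [← Nat.not_even_iff_odd, ← Nat.not_even_iff_odd] at h1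
  tauto

theorem tutte_col {N : Type} [Fintype N] [DecidableEq N] (G : SimpleGraph N)
    (h : ¬ ∃ M : G.Subgraph, M.IsPerfectMatching) :
    ∃ (U : Finset N) (f : N → N), (∀ x, x ∉ U → ∀ y, y ∉ U → G.Adj x y → f x = f y) ∧
      U.card < (Finset.univ.filter
        (fun c => Odd (Finset.univ.filter (fun x => x ∉ U ∧ f x = c)).card)).card := by
  classical
  rw [SimpleGraph.tutte] at h
  push Not at h
  obtain ⟨u, hu⟩ := h
  unfold SimpleGraph.IsTutteViolator at hu
  set K := ((⊤ : G.Subgraph).deleteVerts u).coe with hK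
  have hmem : ∀ x, x ∉ u.toFinset → x ∈ ((⊤ : G.Subgraph).deleteVerts u).verts := by
    intro x hx; simpa using hx
  let f : N → N := fun x => if hx : x ∉ u.toFinset then
    ((K.connectedComponentMk ⟨x, hmem x hx⟩).out).1 else x
  have hfC : ∀ (x : N) (hx : x ∉ u.toFinset), f x = (K.connectedComponentMk ⟨x, hmem x hx⟩).out.1 := by
    intro x hx
    simp only [f]
    rw [dif_pos hx]
  have hinj : ∀ C D : K.ConnectedComponent, C.out.1 = D.out.1 → C = D := by
    intro C D hCD
    have := Subtype.ext hCD
    rw [← Quot.out_eq C, ← Quot.out_eq D, this]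
  refine ⟨u.toFinset, f, ?_, ?_⟩
  · intro x hx y hy hxy
    rw [hfC x hx, hfC y hy]
    congr 2
    apply SimpleGraph.ConnectedComponent.sound
    apply SimpleGraph.Adj.reachable
    rw [hK]
    simp only [SimpleGraph.Subgraph.coe_adj, SimpleGraph.Subgraph.deleteVerts_adj]
    simp at hx hy
    simp [hx, hy, hxy]
  · rw [Set.ncard_eq_toFinset_card' u] at hu
    refine lt_of_lt_of_le hu ?_
    rw [Set.ncard_eq_toFinset_card']
    apply Finset.card_le_card_of_injOn (fun C => C.out.1)
    · intro C hC
      simp only [Set.coe_toFinset, SimpleGraph.oddComponents, Set.mem_ofPred_eq] at hC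
      simp only [Finset.coe_filter, Finset.mem_univ, true_and, Set.mem_ofPred_eq]
      convert hC using 1
      rw [Set.ncard_eq_toFinset_card']
      symm
      apply Finset.card_bij (fun x _ => x.1)
      · intro x hx
        have hxu : x.1 ∉ u.toFinset := by
          have := x.2
          simpa using this
        simp only [Finset.mem_filter, Finset.mem_univ, true_and]
        refine ⟨hxu, ?_⟩
        rw [hfC _ hxu]
        simp only [Set.mem_toFinset, SimpleGraph.ConnectedComponent.mem_supp_iff] at hx
        rw [← hx]
      · intro x _ y _ hxy
        exact Subtype.ext hxy
      · intro x hx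
        simp only [Finset.mem_filter, Finset.mem_univ, true_and] at hx
        refine ⟨⟨x, hmem x hx.1⟩, ?_, rfl⟩
        simp only [Set.mem_toFinset, SimpleGraph.ConnectedComponent.mem_supp_iff]
        apply hinj
        rw [← hfC x hx.1, hx.2]
    · intro C _ D _ hCD
      exact hinj C D hCD

theorem tutte_min {N : Type} [Fintype N] [DecidableEq N] (G : SimpleGraph N)
    (hev : Even (Fintype.card N))
    (h : ¬ ∃ M : G.Subgraph, M.IsPerfectMatching) :
    ∃ (U : Finset N) (f : N → N), (∀ x, x ∉ U → ∀ y, y ∉ U → G.Adj x y → f x = f y) ∧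
      U.card + 2 ≤ (Finset.univ.filter
        (fun c => Odd (Finset.univ.filter (fun x => x ∉ U ∧ f x = c)).card)).card ∧
      ∀ w ∈ U, ∀ c1 c2, ∃ y, y ∉ U ∧ G.Adj w y ∧ f y ≠ c1 ∧ f y ≠ c2 := by
  classical
  let P : ℕ → Prop := fun n => ∃ (U : Finset N) (f : N → N), U.card = n ∧
     (∀ x, x ∉ U → ∀ y, y ∉ U → G.Adj x y → f x = f y) ∧
      U.card < (Finset.univ.filter
        (fun c => Odd (Finset.univ.filter (fun x => x ∉ U ∧ f x = c)).card)).card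
  have hP : ∃ n, P n := by
    obtain ⟨U, f, h1, h2⟩ := tutte_col G h
    exact ⟨_, U, f, rfl, h1, h2⟩
  obtain ⟨U, f, hn, h1, h2⟩ := Nat.find_spec hP
  have hpar := odd_parity U f hev
  have h3 : U.card + 2 ≤ (Finset.univ.filter
        (fun c => Odd (Finset.univ.filter (fun x => x ∉ U ∧ f x = c)).card)).card := by
    obtain ⟨r, hr⟩ := hpar
    omega
  refine ⟨U, f, h1, h3, ?_⟩
  intro w hw c1 c2
  by_contra hcon
  push Not at hcon
  have hpos : 0 < U.card := Finset.card_pos.mpr ⟨w, hw⟩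
  apply Nat.find_min hP (m := U.card - 1) (by omega)
  let f' : N → N := fun y => if y = w then c1 else if f y = c2 then c1 else f y
  refine ⟨U.erase w, f', Finset.card_erase_of_mem hw, ?_, ?_⟩
  · have key : ∀ y, y ∉ U → G.Adj w y → f' y = c1 := by
      intro y hy hwy
      have := hcon y hy hwy
      have hyw : y ≠ w := fun h => hy (h ▸ hw)
      simp only [f', hyw, if_false]
      split_ifs with h5
      · rfl
      · by_contra h6
        exact h5 (this h6)
    have hmem : ∀ x, x ∉ U.erase w → x = w ∨ x ∉ U := by
      intro x hx
      simp only [Finset.mem_erase, not_and] at hx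
      tauto
    intro x hx0 y hy0 hxy
    rcases hmem x hx0 with rfl | hx
    · rcases hmem y hy0 with rfl | hy
      · rfl
      · rw [key y hy hxy]; simp [f']
    · rcases hmem y hy0 with rfl | hy
      · rw [key x ‹x ∉ U› hxy.symm]; simp [f']
      · have hxw : x ≠ w := fun h => hx (h ▸ hw)
        have hyw : y ≠ w := fun h => hy (h ▸ hw)
        simp only [f', hxw, hyw, if_false, h1 x hx y hy hxy]
  · rw [Finset.card_erase_of_mem hw]
    have hsub : ((Finset.univ.filter
        (fun c => Odd (Finset.univ.filter (fun x => x ∉ U ∧ f x = c)).card)).erase c1).erase c2 ⊆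
        (Finset.univ.filter
        (fun c => Odd (Finset.univ.filter (fun x => x ∉ U.erase w ∧ f' x = c)).card)) := by
      intro c hc
      simp only [Finset.mem_erase, Finset.mem_filter, Finset.mem_univ, true_and] at hc ⊢
      obtain ⟨hc2, hc1, hc⟩ := hc
      convert hc using 3
      rename_i x _
      by_cases hxw : x = w
      · subst hxw
        simp [f', hw, Ne.symm hc1]
      · simp only [f', hxw]
        by_cases h7 : f x = c2
        · simp [h7, Ne.symm hc1, Ne.symm hc2]
        · simp [h7, hxw]
    have h8 := Finset.card_le_card hsub
    have h9 := Finset.pred_card_le_card_erase (s := (Finset.univ.filter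
        (fun c => Odd (Finset.univ.filter (fun x => x ∉ U ∧ f x = c)).card))) (a := c1)
    have h10 := Finset.pred_card_le_card_erase (s := (Finset.univ.filter
        (fun c => Odd (Finset.univ.filter (fun x => x ∉ U ∧ f x = c)).card)).erase c1) (a := c2)
    omega

theorem arith_core (a b c k n : ℕ) (hk : 3 ≤ k) (h1 : 2 * a + (k - 2) * b + 2 ≤ c)
    (h2 : 3 * c ≤ k * b + 2 * n) (h3 : n ≤ c) (h4 : n * c ≤ n * k + (k - 1) * (a * k)) :
    a = 0 ∧ b = 1 := by
  obtain ⟨t, rfl⟩ : ∃ t, k = t + 3 := ⟨k - 3, by omega⟩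
  have e1 : t + 3 - 2 = t + 1 := by omega
  have e2 : t + 3 - 1 = t + 2 := by omega
  rw [e1] at h1
  rw [e2] at h4
  have h5 : a + 1 ≤ b := by nlinarith
  obtain ⟨j, rfl⟩ : ∃ j, b = a + 1 + j := ⟨b - (a + 1), by omega⟩
  have h6 : (t + 3) * (a + 1) ≤ n := by nlinarith
  have h7 : (t + 3) * a + (t + 1) * j + (t + 3) ≤ c := by nlinarith
  obtain ⟨d, rfl⟩ : ∃ d, c = d + (t + 3) := ⟨c - (t + 3), by omega⟩
  have h8 : (t + 3) * a + (t + 1) * j ≤ d := by omega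
  have h9 : n * d ≤ (t + 2) * (a * (t + 3)) := by nlinarith
  have h10 : ((t + 3) * (a + 1)) * ((t + 3) * a + (t + 1) * j) ≤ n * d := Nat.mul_le_mul h6 h8
  have h11 : (t + 3) * ((a + 1) * ((t + 3) * a + (t + 1) * j)) ≤ (t + 3) * ((t + 2) * a) := by
    nlinarith
  have h12 := Nat.le_of_mul_le_mul_left h11 (by omega)
  have h13 : a + (t + 1) * j ≤ 0 := by
    nlinarith [Nat.zero_le (a * ((t + 3) * a + (t + 1) * j))]
  have h14 : j ≤ (t + 1) * j := Nat.le_mul_of_pos_left j (by omega)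
  omega

theorem count_core {ι V C : Type} [Fintype ι] [DecidableEq ι] [DecidableEq V] [DecidableEq C]
    (F : ι → Finset V) (k : ℕ) (hk : 3 ≤ k) (hF : ∀ e, (F e).card = k)
    (hcov : ∀ u v : V, u ≠ v → ∃ e, u ∈ F e ∧ v ∈ F e) (hι : 2 ≤ Fintype.card ι)
    (A B : Finset ι) (g : ι → V → C) (O : Finset C) (hAB : ∀ e ∈ B, e ∉ A)
    (hv : ∀ e e' v, e ∉ A → e' ∉ A → v ∈ F e → v ∈ F e' → g e v = g e' v)
    (hr : ∀ e, e ∉ A → e ∉ B → ∀ u ∈ F e, ∀ v ∈ F e, g e u = g e v)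
    (hc : 2 * A.card + (k - 2) * B.card + 2 ≤ O.card)
    (ho : ∀ x ∈ O, Odd ((B.sigma F).filter (fun p => g p.1 p.2 = x)).card) : False := by
  classical
  have hrep : ∀ x ∈ O, ∃ e v, e ∈ B ∧ v ∈ F e ∧ g e v = x := by
    intro x hx
    obtain ⟨p, hp⟩ := Finset.card_pos.mp (ho x hx).pos
    simp only [Finset.mem_filter, Finset.mem_sigma] at hp
    exact ⟨p.1, p.2, hp.1.1, hp.1.2, hp.2⟩
  have hOne : O.Nonempty := Finset.card_pos.mp (by omega)
  obtain ⟨x0, hx0⟩ := hOne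
  obtain ⟨ed, vd, -⟩ := hrep x0 hx0
  have hrep' : ∀ x, ∃ e v, x ∈ O → e ∈ B ∧ v ∈ F e ∧ g e v = x := by
    intro x
    by_cases hx : x ∈ O
    · obtain ⟨e, v, h⟩ := hrep x hx
      exact ⟨e, v, fun _ => h⟩
    · exact ⟨ed, vd, fun h => absurd h hx⟩
  choose ee vv hev using hrep'
  have hcol : ∀ x ∈ O, ∀ e, e ∉ A → vv x ∈ F e → g e (vv x) = x := by
    intro x hx e he hve
    obtain ⟨h1, h2, h3⟩ := hev x hx
    rw [hv e (ee x) (vv x) he (hAB _ h1) hve h2, h3]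
  have hvinj : ∀ x ∈ O, ∀ y ∈ O, vv x = vv y → x = y := by
    intro x hx y hy hxy
    obtain ⟨h1, h2, h3⟩ := hev x hx
    rw [← h3, hxy]
    exact hcol y hy _ (hAB _ h1) (hxy ▸ h2)
  set β : C → ℕ := fun x => ((B.sigma F).filter (fun p => g p.1 p.2 = x)).card with hβ
  set O1 := O.filter (fun x => β x = 1) with hO1
  have hsum : ∑ x ∈ O, β x ≤ k * B.card := by
    have : (B.sigma F).card = k * B.card := by
      rw [Finset.card_sigma, Finset.sum_congr rfl (fun e _ => hF e)]
      simp [mul_comm]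
    rw [← this]
    rw [← Finset.card_biUnion]
    · exact Finset.card_le_card (Finset.biUnion_subset.mpr fun x _ => Finset.filter_subset _ _)
    · intro x _ y _ hxy
      refine Finset.disjoint_left.mpr ?_
      intro p h1 h2
      simp only [Finset.mem_filter] at h1 h2
      exact hxy (h1.2.symm.trans h2.2)
  have h2 : 3 * O.card ≤ k * B.card + 2 * O1.card := by
    have : ∑ x ∈ O, 3 ≤ ∑ x ∈ O, (β x + 2 * (if β x = 1 then 1 else 0)) := by
      apply Finset.sum_le_sum
      intro x hx
      have := ho x hx
      change Odd (β x) at this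
      obtain ⟨r, hr⟩ := this
      split_ifs <;> omega
    rw [Finset.sum_add_distrib, ← Finset.mul_sum, ← Finset.card_filter] at this
    simp only [Finset.sum_const, smul_eq_mul] at this
    rw [← hO1] at this
    omega
  have hdeg : ∀ x ∈ O1, O.card ≤ k + (k - 1) * (A.filter (fun e => vv x ∈ F e)).card := by
    intro x hx
    rw [hO1, Finset.mem_filter] at hx
    obtain ⟨hx, hx1⟩ := hx
    obtain ⟨hex, hvx, hgx⟩ := hev x hx
    have hsub : O ⊆ (F (ee x)).image (g (ee x)) ∪
        (A.filter (fun e => vv x ∈ F e)).biUnion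
          (fun e => (O.erase x).filter (fun y => vv y ∈ F e)) := by
      intro y hy
      rw [Finset.mem_union]
      by_cases hxy : y = x
      · left
        rw [Finset.mem_image]
        exact ⟨vv x, hvx, by rw [hgx, hxy]⟩
      have hne : vv x ≠ vv y := fun h => hxy (hvinj x hx y hy h).symm
      obtain ⟨e, h1, h2⟩ := hcov _ _ hne
      by_cases heA : e ∈ A
      · right
        simp only [Finset.mem_biUnion, Finset.mem_filter, Finset.mem_erase]
        exact ⟨e, ⟨heA, h1⟩, ⟨hxy, hy⟩, h2⟩
      by_cases heB : e ∈ B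
      · left
        obtain ⟨p, hp⟩ := Finset.card_eq_one.mp hx1
        have m1 : (⟨e, vv x⟩ : Σ _ : ι, V) ∈ (B.sigma F).filter (fun p => g p.1 p.2 = x) := by
          simp only [Finset.mem_filter, Finset.mem_sigma]
          exact ⟨⟨heB, h1⟩, hcol x hx e heA h1⟩
        have m2 : (⟨ee x, vv x⟩ : Σ _ : ι, V) ∈ (B.sigma F).filter (fun p => g p.1 p.2 = x) := by
          simp only [Finset.mem_filter, Finset.mem_sigma]
          exact ⟨⟨hex, hvx⟩, hgx⟩
        rw [hp, Finset.mem_singleton] at m1 m2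
        have : e = ee x := by
          have := m1.trans m2.symm
          exact congrArg Sigma.fst this
        subst this
        rw [Finset.mem_image]
        exact ⟨vv y, h2, hcol y hy _ heA h2⟩
      · exfalso
        apply hxy
        rw [← hcol x hx e heA h1, ← hcol y hy e heA h2]
        exact hr e heA heB _ h2 _ h1
    refine (Finset.card_le_card hsub).trans ((Finset.card_union_le _ _).trans ?_)
    apply Nat.add_le_add
    · exact Finset.card_image_le.trans (hF _).le
    · rw [mul_comm]
      apply Finset.card_biUnion_le_card_mul
      intro e he
      rw [Finset.mem_filter] at he
      have : ((F e).erase (vv x)).card = k - 1 := by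
        rw [Finset.card_erase_of_mem he.2, hF]
      rw [← this]
      apply Finset.card_le_card_of_injOn vv
      · intro y hy
        simp only [Finset.coe_filter, Finset.mem_erase, Set.mem_ofPred_eq] at hy
        simp only [Finset.coe_erase, Set.mem_sdiff, Finset.mem_coe, Set.mem_singleton_iff]
        exact ⟨hy.2, fun h => hy.1.1 (hvinj y hy.1.2 x hx h)⟩
      · intro y hy z hz hyz
        simp only [Finset.coe_filter, Finset.mem_erase, Set.mem_ofPred_eq] at hy hz
        exact hvinj y hy.1.2 z hz.1.2 hyz
  have h4 : O1.card * O.card ≤ O1.card * k + (k - 1) * (A.card * k) := by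
    have s1 : ∑ x ∈ O1, O.card ≤ ∑ x ∈ O1, (k + (k - 1) * (A.filter (fun e => vv x ∈ F e)).card) :=
      Finset.sum_le_sum hdeg
    rw [Finset.sum_add_distrib, ← Finset.mul_sum] at s1
    simp only [Finset.sum_const, smul_eq_mul] at s1
    refine s1.trans (Nat.add_le_add_left (Nat.mul_le_mul_left _ ?_) _)
    have s2 : ∑ x ∈ O1, (A.filter (fun e => vv x ∈ F e)).card =
        ∑ e ∈ A, (O1.filter (fun x => vv x ∈ F e)).card :=
      Finset.sum_card_bipartiteAbove_eq_sum_card_bipartiteBelow (fun x e => vv x ∈ F e)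
    rw [s2, ← smul_eq_mul]
    apply Finset.sum_le_card_nsmul
    intro e _
    rw [← hF e]
    apply Finset.card_le_card_of_injOn vv
    · intro y hy
      simp only [Finset.coe_filter, Set.mem_ofPred_eq] at hy
      exact hy.2
    · intro y hy z hz hyz
      simp only [Finset.coe_filter, Set.mem_ofPred_eq, hO1, Finset.mem_filter] at hy hz
      exact hvinj y hy.1.1 z hz.1.1 hyz
  obtain ⟨hA, hB⟩ := arith_core A.card B.card O.card k O1.card hk hc h2
    (Finset.card_filter_le _ _) h4
  rw [Finset.card_eq_zero] at hA
  obtain ⟨e0, he0⟩ := Finset.card_eq_one.mp hB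
  have hA' : ∀ e, e ∉ A := by simp [hA]
  have hee : ∀ x ∈ O, ee x = e0 := by
    intro x hx
    have := (hev x hx).1
    rwa [he0, Finset.mem_singleton] at this
  have : Nontrivial ι := Fintype.one_lt_card_iff_nontrivial.mp hι
  obtain ⟨e', he'⟩ := exists_ne e0
  have he'B : e' ∉ B := by rw [he0, Finset.mem_singleton]; exact he'
  obtain ⟨w0, hw0⟩ : (F e').Nonempty := Finset.card_pos.mp (by rw [hF]; omega)
  have hz : ∀ w ∈ F e', g e' w = g e' w0 := fun w hw => hr e' (hA' _) he'B w hw w0 hw0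
  obtain ⟨x, hx, hxz⟩ : ∃ x ∈ O, x ≠ g e' w0 := Finset.exists_mem_ne (by omega) _
  have hsub : F e' ⊆ F e0 := by
    intro w hw
    have hne : w ≠ vv x := by
      intro h
      apply hxz
      rw [← hz w hw, h]
      exact (hcol x hx e' (hA' _) (h ▸ hw)).symm
    obtain ⟨e, h1, h2⟩ := hcov _ _ hne
    by_cases heB : e ∈ B
    · rw [he0, Finset.mem_singleton] at heB
      exact heB ▸ h1
    · exfalso
      apply hxz
      rw [← hz w hw, hv e' e w (hA' _) (hA' _) hw h1, hr e (hA' _) heB w h1 (vv x) h2]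
      exact (hcol x hx e (hA' _) h2).symm
  have heq : F e' = F e0 := Finset.eq_of_subset_of_card_le hsub (by rw [hF, hF])
  obtain ⟨-, h5, h6⟩ := hev x hx
  rw [hee x hx] at h5 h6
  apply hxz
  rw [← h6, hv e0 e' (vv x) (hA' _) (hA' _) h5 (heq ▸ h5)]
  exact hz _ (heq ▸ h5)

abbrev Nd {ι V : Type} (F : ι → Finset V) (k : ℕ) := (Σ e : ι, F e) ⊕ (ι × Fin (k - 2))

def gadj {ι V : Type} (F : ι → Finset V) (k : ℕ) : Nd F k → Nd F k → Prop
  | Sum.inl x, Sum.inl y => x.1 ≠ y.1 ∧ x.2.1 = y.2.1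
  | Sum.inl x, Sum.inr d => x.1 = d.1
  | Sum.inr d, Sum.inl x => x.1 = d.1
  | Sum.inr _, Sum.inr _ => False

def gad {ι V : Type} (F : ι → Finset V) (k : ℕ) : SimpleGraph (Nd F k) where
  Adj := gadj F k
  symm := ⟨by
    rintro (x | d) (y | d') h
    · exact ⟨h.1.symm, h.2.symm⟩
    · exact h
    · exact h
    · exact h⟩
  loopless := ⟨by
    rintro (x | d) h
    · exact h.1 rfl
    · exact h⟩

theorem nd_even {ι V : Type} [Fintype ι] [DecidableEq V] (F : ι → Finset V) (k : ℕ)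
    (hk : 3 ≤ k) (hF : ∀ e, (F e).card = k) : Even (Fintype.card (Nd F k)) := by
  simp only [Fintype.card_sum, Fintype.card_sigma, Fintype.card_coe, hF, Fintype.card_prod,
    Fintype.card_fin, Finset.sum_const, smul_eq_mul, Finset.card_univ]
  rw [← mul_add]
  apply Even.mul_left
  exact ⟨k - 1, by omega⟩

theorem gad_pm {ι V : Type} [Fintype ι] [DecidableEq ι] [DecidableEq V]
    (F : ι → Finset V) (k : ℕ) (hk : 3 ≤ k) (hF : ∀ e, (F e).card = k)
    (hcov : ∀ u v : V, u ≠ v → ∃ e, u ∈ F e ∧ v ∈ F e) (hι : 2 ≤ Fintype.card ι) :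
    ∃ M : (gad F k).Subgraph, M.IsPerfectMatching := by
  classical
  by_contra hno
  obtain ⟨U, f, h1, h2, h3⟩ := tutte_min (gad F k) (nd_even F k hk hF) hno
  have hII : ∀ e e' v (h : v ∈ F e) (h' : v ∈ F e'), Sum.inl ⟨e, v, h⟩ ∉ U →
      Sum.inl ⟨e', v, h'⟩ ∉ U → f (Sum.inl ⟨e, v, h⟩) = f (Sum.inl ⟨e', v, h'⟩) := by
    intro e e' v h h' hU hU'
    by_cases he : e = e'
    · subst he; rfl
    · exact h1 _ hU _ hU' ⟨he, rfl⟩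
  have hID : ∀ e v (h : v ∈ F e) i, Sum.inl ⟨e, v, h⟩ ∉ U → Sum.inr (e, i) ∉ U →
      f (Sum.inl ⟨e, v, h⟩) = f (Sum.inr (e, i)) := by
    intro e v h i hU hU'
    exact h1 _ hU _ hU' rfl
  have c1 : ∀ e v (h : v ∈ F e), Sum.inl ⟨e, v, h⟩ ∈ U → ∀ u (hu : u ∈ F e),
      Sum.inl ⟨e, u, hu⟩ ∈ U := by
    intro e v h hU u hu
    by_contra hnu
    have : ∃ c2, ∀ e' (h' : v ∈ F e'), Sum.inl ⟨e', v, h'⟩ ∉ U →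
        f (Sum.inl ⟨e', v, h'⟩) = c2 := by
      by_cases hex : ∃ e' , ∃ (h' : v ∈ F e'), Sum.inl ⟨e', v, h'⟩ ∉ U
      · obtain ⟨e'', h'', hn⟩ := hex
        exact ⟨_, fun e' h' hn' => hII e' e'' v h' h'' hn' hn⟩
      · push Not at hex
        exact ⟨Sum.inl ⟨e, v, h⟩, fun e' h' hn => absurd (hex e' h') hn⟩
    obtain ⟨c2, hc2⟩ := this
    obtain ⟨y, hy, hadj, hy1, hy2⟩ := h3 _ hU (f (Sum.inl ⟨e, u, hu⟩)) c2
    rcases y with ⟨e', v', h'⟩ | ⟨e', i⟩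
    · obtain ⟨_, h5⟩ := hadj
      simp only at h5
      subst h5
      exact hy2 (hc2 e' h' hy)
    · change e = e' at hadj
      subst hadj
      exact hy1 (hID e u hu i hnu hy).symm
  have c2 : ∀ e i, Sum.inr (e, i) ∈ U → ∀ j, Sum.inr (e, j) ∈ U := by
    intro e i hU j
    by_contra hj
    obtain ⟨y, hy, hadj, hy1, hy2⟩ := h3 _ hU (f (Sum.inr (e, j))) (f (Sum.inr (e, j)))
    rcases y with ⟨e', v', h'⟩ | ⟨e', i⟩
    · change e' = e at hadj
      subst hadj
      exact hy1 (hID _ _ _ _ hy hj)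
    · exact hadj
  have c3 : ∀ e i, Sum.inr (e, i) ∈ U → ∀ v (h : v ∈ F e), Sum.inl ⟨e, v, h⟩ ∉ U := by
    intro e i hU v h hv
    obtain ⟨y, hy, hadj, hy1, hy2⟩ := h3 _ hU (Sum.inr (e, i)) (Sum.inr (e, i))
    rcases y with ⟨e', v', h'⟩ | ⟨e', i⟩
    · change e' = e at hadj
      subst hadj
      exact hy (c1 _ _ _ hv _ _)
    · exact hadj
  let A : Finset ι := Finset.univ.filter (fun e => ∃ v, ∃ (h : v ∈ F e), Sum.inl ⟨e, v, h⟩ ∈ U)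
  let B : Finset ι := Finset.univ.filter (fun e => ∃ i, Sum.inr (e, i) ∈ U)
  have hA : ∀ e, e ∈ A ↔ ∃ v, ∃ (h : v ∈ F e), Sum.inl ⟨e, v, h⟩ ∈ U := by simp [A]
  have hB : ∀ e, e ∈ B ↔ ∃ i, Sum.inr (e, i) ∈ U := by simp [B]
  have hAB : ∀ e ∈ B, e ∉ A := by
    intro e he
    rw [hB] at he
    rw [hA]
    obtain ⟨i, hi⟩ := he
    rintro ⟨v, h, hv⟩
    exact c3 e i hi v h hv
  have hA1 : ∀ e ∈ A, ∀ v (h : v ∈ F e), Sum.inl ⟨e, v, h⟩ ∈ U := by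
    intro e he v h
    obtain ⟨u, hu, hU⟩ := (hA e).mp he
    exact c1 e u hu hU v h
  have hA2 : ∀ e, e ∉ A → ∀ v (h : v ∈ F e), Sum.inl ⟨e, v, h⟩ ∉ U := by
    intro e he v h hU
    exact he ((hA e).mpr ⟨v, h, hU⟩)
  have hB1 : ∀ e ∈ B, ∀ i, Sum.inr (e, i) ∈ U := by
    intro e he i
    obtain ⟨j, hj⟩ := (hB e).mp he
    exact c2 e j hj i
  have hB2 : ∀ e, e ∉ B → ∀ i, Sum.inr (e, i) ∉ U := by
    intro e he i hU
    exact he ((hB e).mpr ⟨i, hU⟩)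
  have hUc : k * A.card + (k - 2) * B.card ≤ U.card := by
    rw [← Finset.card_toLeft_add_card_toRight (u := U)]
    apply Nat.add_le_add
    · have : (A.sigma (fun e => (Finset.univ : Finset (F e)))).card = k * A.card := by
        simp [Finset.card_sigma, hF, mul_comm]
      rw [← this]
      apply Finset.card_le_card
      rintro ⟨e, v, h⟩ hp
      simp only [Finset.mem_sigma, Finset.mem_univ, and_true] at hp
      rw [Finset.mem_toLeft]
      exact hA1 e hp v h
    · have : (B ×ˢ (Finset.univ : Finset (Fin (k - 2)))).card = (k - 2) * B.card := by
        simp [Finset.card_product, mul_comm]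
      rw [← this]
      apply Finset.card_le_card
      rintro ⟨e, i⟩ hp
      simp only [Finset.mem_product, Finset.mem_univ, and_true] at hp
      rw [Finset.mem_toRight]
      exact hB1 e hp i
  set OO := Finset.univ.filter
        (fun c => Odd (Finset.univ.filter (fun x => x ∉ U ∧ f x = c)).card) with hOO
  set D := (A ×ˢ (Finset.univ : Finset (Fin (k - 2)))).image (fun p => f (Sum.inr p)) with hD
  have hDc : D.card ≤ (k - 2) * A.card := by
    refine Finset.card_image_le.trans ?_
    simp [Finset.card_product, mul_comm]
  have hO : OO.card ≤ (OO \ D).card + D.card := by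
    have := Finset.le_card_sdiff D OO
    omega
  have hkA : k * A.card = (k - 2) * A.card + 2 * A.card := by
    rw [← add_mul]; congr 1; omega
  let g : ι → V → Nd F k := fun e v =>
    if h : v ∈ F e then f (Sum.inl ⟨e, v, h⟩) else Sum.inr (e, ⟨0, by omega⟩)
  have hg : ∀ e v (h : v ∈ F e), g e v = f (Sum.inl ⟨e, v, h⟩) := by
    intro e v h
    simp [g, h]
  have hsame : ∀ e, e ∉ A → e ∉ B → ∀ v (h : v ∈ F e), ∀ i,
      f (Sum.inl ⟨e, v, h⟩) = f (Sum.inr (e, i)) := fun e heA heB v h i =>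
    hID e v h i (hA2 e heA v h) (hB2 e heB i)
  refine count_core F k hk hF hcov hι A B g (OO \ D) hAB ?_ ?_ (by omega) ?_
  · intro e e' v he he' h h'
    rw [hg e v h, hg e' v h']
    exact hII e e' v h h' (hA2 _ he _ _) (hA2 _ he' _ _)
  · intro e heA heB u hu v hv
    rw [hg e u hu, hg e v hv, hsame e heA heB u hu ⟨0, by omega⟩,
      hsame e heA heB v hv ⟨0, by omega⟩]
  · intro x hx
    rw [Finset.mem_sdiff, hOO, Finset.mem_filter] at hx
    obtain ⟨⟨_, hodd⟩, hxD⟩ := hx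
    have hxD' : ∀ e ∈ A, ∀ i, f (Sum.inr (e, i)) ≠ x := by
      intro e he i h
      apply hxD
      rw [hD, Finset.mem_image]
      exact ⟨(e, i), by simp [he], h⟩
    let n : ι → ℕ := fun e =>
      (∑ v : F e, if Sum.inl ⟨e, v⟩ ∉ U ∧ f (Sum.inl ⟨e, v⟩) = x then 1 else 0) +
      (∑ i : Fin (k - 2), if Sum.inr (e, i) ∉ U ∧ f (Sum.inr (e, i)) = x then 1 else 0)
    have hcard : (Finset.univ.filter (fun y => y ∉ U ∧ f y = x)).card = ∑ e, n e := by
      rw [Finset.card_filter, Fintype.sum_sum_type, Fintype.sum_sigma, Fintype.sum_prod_type,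
        ← Finset.sum_add_distrib]
    have hnB : ∀ e ∈ B, n e = ((F e).filter (fun v => g e v = x)).card := by
      intro e he
      simp only [n]
      rw [Finset.sum_eq_zero (s := (Finset.univ : Finset (Fin (k - 2)))), add_zero,
        Finset.card_filter, ← Finset.sum_coe_sort (F e)]
      · apply Finset.sum_congr rfl
        rintro ⟨v, h⟩ _
        simp only [hg e v h, hA2 e (hAB e he) v h, not_false_eq_true, true_and]
      · intro i _
        simp [hB1 e he i]
    have hnE : ∀ e, e ∉ B → Even (n e) := by
      intro e heB
      by_cases heA : e ∈ A
      · have : n e = 0 := by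
          have z1 : (∑ v : F e, if Sum.inl ⟨e, v⟩ ∉ U ∧ f (Sum.inl ⟨e, v⟩) = x then 1 else 0) = 0 :=
            Finset.sum_eq_zero (by
              rintro ⟨v, h⟩ _
              simp [hA1 e heA v h])
          have z2 : (∑ i : Fin (k - 2),
              if Sum.inr (e, i) ∉ U ∧ f (Sum.inr (e, i)) = x then 1 else 0) = 0 :=
            Finset.sum_eq_zero (by
              intro i _
              simp [hxD' e heA i])
          simp only [n]
          rw [z1, z2]
        rw [this]; exact Even.zero
      · have hs := hsame e heA heB
        obtain ⟨w0, hw0⟩ : (F e).Nonempty := Finset.card_pos.mp (by rw [hF]; omega)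
        have hs1 : ∀ i, f (Sum.inr (e, i)) = f (Sum.inl ⟨e, w0, hw0⟩) := fun i => (hs w0 hw0 i).symm
        have hs2 : ∀ v : F e, f (Sum.inl ⟨e, v⟩) = f (Sum.inl ⟨e, w0, hw0⟩) := fun v =>
          (hs v.1 v.2 ⟨0, by omega⟩).trans (hs1 _)
        have : n e = if f (Sum.inl ⟨e, w0, hw0⟩) = x then k + (k - 2) else 0 := by
          simp only [n, hs1, hs2, hB2 e heB, fun v : F e => hA2 e heA v.1 v.2,
            not_false_eq_true, true_and]
          split_ifs <;> simp [hF]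
        rw [this]
        split_ifs
        · exact ⟨k - 1, by omega⟩
        · exact Even.zero
    rw [hcard, ← Finset.sum_add_sum_compl B n] at hodd
    have hev : Even (∑ e ∈ Bᶜ, n e) := Finset.even_sum _ (fun e he => hnE e (by simpa using he))
    have hodd2 : Odd (∑ e ∈ B, n e) := by
      rw [Nat.odd_add] at hodd
      exact hodd.mpr hev
    convert hodd2 using 1
    rw [Finset.sum_congr rfl hnB, ← Finset.card_sigma]
    congr 1
    ext p
    simp only [Finset.mem_filter, Finset.mem_sigma, and_assoc]

theorem gad_pairs {ι V : Type} [Fintype ι] [DecidableEq ι] [DecidableEq V]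
    (F : ι → Finset V) (k : ℕ) (hk : 3 ≤ k) (hF : ∀ e, (F e).card = k)
    (σ : Nd F k → Nd F k) (hσ : ∀ x, σ (σ x) = x) (hadj : ∀ x, (gad F k).Adj x (σ x)) :
    ∃ a b : ι → V, (∀ e, a e ≠ b e ∧ a e ∈ F e ∧ b e ∈ F e) ∧
      ∀ w, Even (∑ e, ((if a e = w then 1 else 0) + (if b e = w then 1 else 0))) := by
  classical
  have hQ : ∀ e, ((Finset.univ : Finset (F e)).filter
      (fun v => (σ (Sum.inl ⟨e, v⟩)).isLeft = true)).card = 2 := by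
    intro e
    have h1 := Finset.card_filter_add_card_filter_not (s := (Finset.univ : Finset (F e)))
      (fun v => (σ (Sum.inl ⟨e, v⟩)).isLeft = true)
    have h2 : ((Finset.univ : Finset (F e)).filter
      (fun v => ¬ (σ (Sum.inl ⟨e, v⟩)).isLeft = true)).card = k - 2 := by
      have hm : ∀ i : Fin (k - 2), ∃ v : F e, σ (Sum.inr (e, i)) = Sum.inl ⟨e, v⟩ := by
        intro i
        have := hadj (Sum.inr (e, i))
        rcases hy : σ (Sum.inr (e, i)) with ⟨e', v⟩ | d
        · rw [hy] at this
          change e' = e at this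
          subst this
          exact ⟨v, rfl⟩
        · rw [hy] at this
          exact this.elim
      choose m hm using hm
      have : (Finset.univ : Finset (Fin (k - 2))).card = k - 2 := by simp
      refine Eq.trans ?_ this
      symm
      apply Finset.card_bij (fun i _ => m i)
      · intro i _
        simp [← hm, hσ]
      · intro i _ j _ hij
        have : σ (Sum.inr (e, i)) = σ (Sum.inr (e, j)) := by rw [hm, hm, hij]
        have := congrArg σ this
        rw [hσ, hσ] at this
        simpa using this
      · intro v hv
        simp only [Finset.mem_filter, Finset.mem_univ, true_and] at hv
        have := hadj (Sum.inl ⟨e, v⟩)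
        rcases hy : σ (Sum.inl ⟨e, v⟩) with p | ⟨e', i⟩
        · rw [hy] at hv; simp at hv
        · rw [hy] at this
          change e = e' at this
          subst this
          refine ⟨i, Finset.mem_univ _, ?_⟩
          have h3 := hm i
          rw [← hy, hσ] at h3
          simpa using h3.symm
    rw [h2] at h1
    simp only [Finset.card_univ, Fintype.card_coe, hF] at h1
    omega
  have hQ2 := fun e => Finset.card_eq_two.mp (hQ e)
  choose a b hab hQab using hQ2
  refine ⟨fun e => (a e).1, fun e => (b e).1,
    fun e => ⟨fun h => hab e (Subtype.ext h), (a e).2, (b e).2⟩, ?_⟩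
  intro w
  let P : Nd F k → Prop := fun y => Sum.elim (fun p => p.2.1 = w) (fun _ => False) y ∧
    (σ y).isLeft = true
  have hcard : (Finset.univ.filter P).card =
      ∑ e, ((if (a e).1 = w then 1 else 0) + (if (b e).1 = w then 1 else 0)) := by
    rw [Finset.card_filter, Fintype.sum_sum_type, Fintype.sum_sigma]
    rw [Finset.sum_eq_zero (s := (Finset.univ : Finset (ι × Fin (k - 2)))), add_zero]
    · apply Finset.sum_congr rfl
      intro e _
      have : ∀ v : F e, (if P (Sum.inl ⟨e, v⟩) then 1 else 0) =
          if (σ (Sum.inl ⟨e, v⟩)).isLeft = true then (if v.1 = w then 1 else 0) else 0 := by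
        intro v
        simp only [P, Sum.elim_inl]
        by_cases h1 : v.1 = w <;> by_cases h2 : (σ (Sum.inl ⟨e, v⟩)).isLeft = true <;>
          simp [h1, h2]
      refine (Finset.sum_congr rfl (fun v _ => (?_ : _ =
        if (σ (Sum.inl ⟨e, v⟩)).isLeft = true then (if v.1 = w then 1 else 0) else 0))).trans ?_
      · convert this v
      rw [← Finset.sum_filter, hQab, Finset.sum_pair (hab e)]
    · intro d _
      simp [P]
  rw [← hcard]
  have hz : ((Finset.univ.filter P).card : ZMod 2) = 0 := by
    rw [Finset.card_eq_sum_ones, Nat.cast_sum]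
    apply Finset.sum_involution (fun y _ => σ y)
    · intro y _
      simp only [Nat.cast_one]
      decide
    · intro y _ _ h
      have := hadj y
      rw [h] at this
      exact this.ne rfl
    · intro y hy
      simp only [Finset.mem_filter, Finset.mem_univ, true_and, P] at hy ⊢
      have had := hadj y
      rcases y with p | d
      · rcases hy' : σ (Sum.inl p) with q | d
        · rw [hy'] at had
          have h5 := hσ (Sum.inl p)
          rw [hy'] at h5
          rw [h5]
          refine ⟨?_, rfl⟩
          have := had.2
          simp only [Sum.elim_inl] at hy ⊢
          rw [← this]; exact hy.1
        · rw [hy'] at hy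
          simp at hy
      · simp at hy
    · intro y _
      exact hσ y
  exact (ZMod.natCast_eq_zero_iff_even).mp hz

theorem cover_quasi {ι V : Type} [Fintype ι] [DecidableEq ι] [DecidableEq V]
    (F : ι → Finset V) (k : ℕ) (hk : 3 ≤ k) (hF : ∀ e, (F e).card = k)
    (hcov : ∀ u v : V, u ≠ v → ∃ e, u ∈ F e ∧ v ∈ F e) (hι : 2 ≤ Fintype.card ι) :
    IsQuasiEulerian ((Finset.univ : Finset ι).val.map F) := by
  obtain ⟨M, hM⟩ := gad_pm F k hk hF hcov hι
  obtain ⟨σ, h1, h2⟩ := tutte_inv _ M hM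
  obtain ⟨a, b, h3, h4⟩ := gad_pairs F k hk hF σ h1 h2
  apply fam_quasi ((Finset.univ : Finset ι).val.map (fun e => (a e, b e, [(a e, F e)])))
  refine ⟨?_, ?_, ?_⟩
  · intro t ht
    rw [Multiset.mem_map] at ht
    obtain ⟨e, _, rfl⟩ := ht
    obtain ⟨h5, h6, h7⟩ := h3 e
    exact ⟨Tr.cons h5 h6 h7 (Tr.nil _), by simp⟩
  · rw [Multiset.map_map]
    simp only [Function.comp_def, TT.es, List.map_cons, List.map_nil, Multiset.coe_singleton]
    rw [← Multiset.sum_map_singleton (Multiset.map F _), Multiset.map_map]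
    rfl
  · intro w
    rw [Multiset.map_map]
    convert h4 w using 1
    simp only [Function.comp_def, TT.en, Finset.sum]
    congr!

theorem quasi_two {V : Type} (E : Multiset (Finset V)) (hE : E ≠ 0) (h : IsQuasiEulerian E) :
    2 ≤ Multiset.card E := by
  obtain ⟨n, len, v, e, h1, h2, h3, h4⟩ := h
  rcases n with _ | n
  · simp at h4
    exact absurd h4.symm hE
  have hl : 2 ≤ len 0 := by
    by_contra hlt
    have h5 : len 0 = 1 := by have := h1 0; omega
    obtain ⟨h6, h7⟩ := h2 0
    have h8 := (h7 ⟨0, by omega⟩).1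
    apply h8
    convert h6 using 2
    all_goals
      apply Fin.ext
      simp [h5]
  rw [← h4, Multiset.card_sum]
  have h9 : len 0 ≤ ∑ i, Multiset.card (walkEdges (e i)) := by
    have : Multiset.card (walkEdges (e 0)) = len 0 := by simp [walkEdges]
    rw [← this]
    exact Finset.single_le_sum (f := fun i => Multiset.card (walkEdges (e i)))
      (fun _ _ => Nat.zero_le _) (Finset.mem_univ 0)
  omega

/-- Let `2 ≤ ℓ < k` and let `H` be an `ℓ`-covering `k`-hypergraph.  Then `H` is
quasi-eulerian if and only if `H` has at least two edges. -/
theorem lCoveringKHypergraph_quasiEulerian_iff {V : Type} [Fintype V] [DecidableEq V]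
    (l k : ℕ) (hl : 2 ≤ l) (hlk : l < k) (E : Multiset (Finset V))
    (hH : IsCoveringHypergraph E l k) :
    IsQuasiEulerian E ↔ 2 ≤ Multiset.card E := by
  obtain ⟨hE, hcard, hcov⟩ := hH
  refine ⟨quasi_two E hE, fun h2 => ?_⟩
  obtain ⟨L, rfl⟩ : ∃ L : List (Finset V), E = (L : Multiset (Finset V)) :=
    ⟨E.toList, (Multiset.coe_toList E).symm⟩
  have hV : l ≤ (Finset.univ : Finset V).card := by
    obtain ⟨f, hf⟩ := Multiset.exists_mem_of_ne_zero hE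
    have h1 := hcard f hf
    have h2 := Finset.card_le_univ f
    rw [Finset.card_univ]
    omega
  have key := cover_quasi (fun i : Fin L.length => L.get i) k (by omega)
    (fun i => hcard _ (Multiset.mem_coe.mpr (List.get_mem _ _))) ?_ (by simpa using h2)
  · convert key using 1
    have : (Finset.univ : Finset (Fin L.length)).val = ↑(List.finRange L.length) := rfl
    rw [this, Multiset.map_coe]
    congr 1
    exact (List.map_get_finRange L).symm
  · intro u v huv
    obtain ⟨s, hs, _, hsc⟩ := Finset.exists_subsuperset_card_eq
      (Finset.subset_univ ({u, v} : Finset V)) (by rw [Finset.card_pair huv]; exact hl) hV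
    obtain ⟨f, hf, hsf⟩ := hcov s hsc
    obtain ⟨i, hi⟩ := List.get_of_mem (Multiset.mem_coe.mp hf)
    refine ⟨i, ?_, ?_⟩
    · simp only [hi]; exact hsf (hs (by simp))
    · simp only [hi]; exact hsf (hs (by simp))
end

section
/- Let H be a hypergraph with at least two edges such that every two edges of H (counted with multiplicity) share at least two vertices, and some two distinct edges of H share at least three vertices. Then H is eulerian. -/
def WalkL {V : Type} : V → List (Finset V) → V → Prop
  | u, [], w => u = w
  | u, a :: l, w => ∃ u', u ≠ u' ∧ u ∈ a ∧ u' ∈ a ∧ WalkL u' l w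

theorem WalkL.append_one {V : Type} {e : Finset V} {x : V} :
    ∀ (l : List (Finset V)) (u w : V), WalkL u l w → w ≠ x → w ∈ e → x ∈ e →
      WalkL u (l ++ [e]) x
  | [], u, w, h, h1, h2, h3 => by
    have h : u = w := h
    subst h
    exact ⟨x, h1, h2, h3, rfl⟩
  | a :: l, u, w, h, h1, h2, h3 => by
    obtain ⟨u', p, q, r, s⟩ := h
    exact ⟨u', p, q, r, WalkL.append_one l u' w s h1 h2 h3⟩

theorem WalkL.toFin {V : Type} : ∀ (l : List (Finset V)) (u w : V), WalkL u l w →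
    ∃ v : Fin (l.length + 1) → V, v 0 = u ∧ v (Fin.last _) = w ∧
      ∀ i : Fin l.length, v i.castSucc ≠ v i.succ ∧ v i.castSucc ∈ l.get i ∧ v i.succ ∈ l.get i
  | [], u, w, h => ⟨fun _ => u, rfl, h, fun i => i.elim0⟩
  | a :: l, u, w, h => by
    obtain ⟨u', p, q, r, s⟩ := h
    obtain ⟨v, h0, h1, h2⟩ := WalkL.toFin l u' w s
    refine ⟨Fin.cons u v, rfl, h1, ?_⟩
    intro i
    refine Fin.cases ?_ (fun j => ?_) i
    · change u ≠ v 0 ∧ u ∈ a ∧ v 0 ∈ a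
      rw [h0]; exact ⟨p, q, r⟩
    · exact h2 j

theorem exists_walkL {V : Type} [DecidableEq V] (e : Finset V) :
    ∀ (l : List (Finset V)) (u : V),
      (l ++ [e]).Pairwise (fun a b => 2 ≤ (a ∩ b).card) →
      (∀ g ∈ (l ++ [e]).head?, u ∈ g) → ∃ w, w ∈ e ∧ WalkL u l w
  | [], u, _, h => ⟨u, h e (by simp), rfl⟩
  | a :: l, u, hp, h => by
    have hu : u ∈ a := h a (by simp)
    rw [List.cons_append, List.pairwise_cons] at hp
    obtain ⟨b, hb⟩ : ∃ b, (l ++ [e]).head? = some b := by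
      cases l <;> simp
    have hc := hp.1 b (List.mem_of_head? hb)
    obtain ⟨u', hu', hne⟩ := Finset.exists_mem_ne (s := a ∩ b) (by omega) u
    rw [Finset.mem_inter] at hu'
    obtain ⟨w, hw, hW⟩ := exists_walkL e l u' hp.2 (by
      intro g hg
      rw [hb] at hg
      cases hg
      exact hu'.2)
    exact ⟨w, hw, u', hne.symm, hu, hu'.1, hW⟩

/-- Let `H` be a hypergraph with at least two edges such that every two edges (counted
with multiplicity, i.e. every sub-multiset `{e, f}` of the edge multiset) share at least
two vertices, and some two distinct edges share at least three vertices.  Then `H` is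
eulerian. -/
theorem eulerian_of_pairwise_intersections {V : Type} [Fintype V] [DecidableEq V]
    (E : Multiset (Finset V)) (h2 : 2 ≤ Multiset.card E)
    (hint : ∀ e f : Finset V, (e ::ₘ ({f} : Multiset (Finset V))) ≤ E →
      2 ≤ (e ∩ f).card)
    (hbig : ∃ e f : Finset V, (e ::ₘ ({f} : Multiset (Finset V))) ≤ E ∧
      3 ≤ (e ∩ f).card) :
    IsEulerian E := by
  obtain ⟨e, f, hle, h3⟩ := hbig
  obtain ⟨R, rfl⟩ := Multiset.le_iff_exists_add.1 hle
  obtain ⟨r, rfl⟩ : ∃ r : List (Finset V), R = (r : Multiset (Finset V)) :=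
    ⟨R.toList, (Multiset.coe_toList R).symm⟩
  have hE : (e ::ₘ ({f} : Multiset (Finset V))) + (r : Multiset (Finset V))
      = ((f :: (r ++ [e]) : List (Finset V)) : Multiset (Finset V)) := by
    change ((e :: f :: r : List (Finset V)) : Multiset (Finset V)) = _
    rw [Multiset.coe_eq_coe]
    refine (List.Perm.swap f e r).trans (List.Perm.cons f ?_)
    exact (List.perm_append_singleton e r).symm
  rw [hE] at hint ⊢
  have hp : (f :: (r ++ [e])).Pairwise (fun a b => 2 ≤ (a ∩ b).card) := by
    rw [List.pairwise_iff_forall_sublist]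
    intro a b hab
    exact hint a b (Multiset.coe_le.2 hab.subperm)
  rw [List.pairwise_cons] at hp
  obtain ⟨b, hb⟩ : ∃ b, (r ++ [e]).head? = some b := by
    cases r <;> simp
  have hc := hp.1 b (List.mem_of_head? hb)
  obtain ⟨u, hu⟩ : (f ∩ b).Nonempty := Finset.card_pos.1 (by omega)
  rw [Finset.mem_inter] at hu
  obtain ⟨w, hw, hW⟩ := exists_walkL e r u hp.2 (by
    intro g hg
    rw [hb] at hg
    cases hg
    exact hu.2)
  obtain ⟨x, hx, hxn⟩ : ∃ x ∈ e ∩ f, x ∉ ({u, w} : Finset V) :=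
    Finset.exists_mem_notMem_of_card_lt_card
      (lt_of_le_of_lt Finset.card_le_two (by omega))
  simp only [Finset.mem_insert, Finset.mem_singleton, not_or] at hxn
  rw [Finset.mem_inter] at hx
  have hfin : WalkL x (f :: (r ++ [e])) x :=
    ⟨u, hxn.1, hx.2, hu.1, WalkL.append_one r u w hW (Ne.symm hxn.2) hw hx.1⟩
  obtain ⟨v, h0, h1, hv⟩ := WalkL.toFin _ _ _ hfin
  refine ⟨_, v, (f :: (r ++ [e])).get, ⟨h0.trans h1.symm, hv⟩, ?_⟩
  unfold walkEdges
  rw [List.ofFn_get]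
end

section
/- Let k ≥ 4 and let H be a 2-covering k-hypergraph of order n with at least two edges. If (k, n) = (4, 6), or n ≤ 2k − 3, then H is eulerian. -/
inductive HTrail {V : Type} : V → List (Finset V) → V → Prop
  | nil (x : V) : HTrail x [] x
  | cons {x y z : V} {f : Finset V} {l : List (Finset V)} (hxy : x ≠ y) (hx : x ∈ f) (hy : y ∈ f)
      (h : HTrail y l z) : HTrail x (f :: l) z

theorem HTrail.append {V : Type} {x y z : V} {l m : List (Finset V)} (h : HTrail x l y)
    (h' : HTrail y m z) : HTrail x (l ++ m) z := by
  induction h with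
  | nil x => exact h'
  | cons hxy hx hy _ ih => exact HTrail.cons hxy hx hy (ih h')

theorem HTrail.toFun {V : Type} {x z : V} {l : List (Finset V)} (h : HTrail x l z) :
    ∃ v : Fin (l.length + 1) → V, v 0 = x ∧ v (Fin.last _) = z ∧
      ∀ i : Fin l.length, v i.castSucc ≠ v i.succ ∧ v i.castSucc ∈ l.get i ∧ v i.succ ∈ l.get i := by
  induction h with
  | nil x => exact ⟨fun _ => x, rfl, rfl, fun i => i.elim0⟩
  | @cons x y z f l hxy hx hy _ ih =>
    obtain ⟨v, h0, hl, hv⟩ := ih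
    refine ⟨Fin.cons x v, rfl, ?_, ?_⟩
    · exact hl
    · intro i
      refine Fin.cases ?_ (fun j => ?_) i
      · subst h0
        exact ⟨hxy, hx, hy⟩
      · exact hv j

theorem HTrail.eulerian {V : Type} {x : V} {l : List (Finset V)} (h : HTrail x l x) :
    IsEulerian (l : Multiset (Finset V)) := by
  obtain ⟨v, h0, hl, hv⟩ := h.toFun
  refine ⟨l.length, v, l.get, ⟨h0.trans hl.symm, hv⟩, ?_⟩
  unfold walkEdges
  rw [List.ofFn_get]

theorem HTrail.extend {V : Type} [DecidableEq V] (d : Finset V) (r : List (Finset V)) :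
    ∀ (f : Finset V) (x : V), x ∈ f →
    (∀ a ∈ d :: f :: r, ∀ b ∈ d :: f :: r, 2 ≤ (a ∩ b).card) →
    ∃ y ∈ d, HTrail x (f :: r) y := by
  induction r with
  | nil =>
    intro f x hx hP
    obtain ⟨y, hy, hyx⟩ := Finset.exists_mem_ne (s := f ∩ d) (by
      have := hP f (by simp) d (by simp); omega) x
    rw [Finset.mem_inter] at hy
    exact ⟨y, hy.2, HTrail.cons hyx.symm hx hy.1 (HTrail.nil y)⟩
  | cons g r ih =>
    intro f x hx hP
    obtain ⟨y, hy, hyx⟩ := Finset.exists_mem_ne (s := f ∩ g) (by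
      have := hP f (by simp) g (by simp); omega) x
    rw [Finset.mem_inter] at hy
    obtain ⟨z, hz, hT⟩ := ih g y hy.2 (fun a ha b hb => hP a (by
      simp only [List.mem_cons] at ha ⊢; tauto) b (by
      simp only [List.mem_cons] at hb ⊢; tauto))
    exact ⟨z, hz, HTrail.cons hyx.symm hx hy.1 hT⟩

theorem eulerian_of_triple {V : Type} [DecidableEq V] (d e f : Finset V) (r : List (Finset V))
    (x : V) (hP : ∀ a ∈ d :: e :: f :: r, ∀ b ∈ d :: e :: f :: r, 2 ≤ (a ∩ b).card)
    (hxe : x ∈ e) (hxf : x ∈ f) (hc : 2 ≤ ((d ∩ e).erase x).card) :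
    IsEulerian ((d :: e :: f :: r : List (Finset V)) : Multiset (Finset V)) := by
  obtain ⟨y, hy, hT⟩ := HTrail.extend d r f x hxf (fun a ha b hb => hP a (by
      simp only [List.mem_cons] at ha ⊢; tauto) b (by
      simp only [List.mem_cons] at hb ⊢; tauto))
  obtain ⟨z, hz, hzy⟩ := Finset.exists_mem_ne (s := (d ∩ e).erase x) (by omega) y
  simp only [Finset.mem_erase, Finset.mem_inter] at hz
  have h := (hT.append (HTrail.cons hzy.symm hy hz.2.1
    (HTrail.cons hz.1 hz.2.2 hxe (HTrail.nil x)))).eulerian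
  have hp : ((f :: r) ++ [d, e]).Perm (d :: e :: f :: r) :=
    List.perm_append_comm (l₁ := f :: r) (l₂ := [d, e])
  rwa [Multiset.coe_eq_coe.mpr hp] at h

/-- Let `k ≥ 4` and let `H` be a 2-covering `k`-hypergraph of order `n` with at least
two edges.  If `(k, n) = (4, 6)` or `n ≤ 2k − 3`, then `H` is eulerian. -/
theorem twoCoveringKHypergraph_smallOrder_eulerian {V : Type} [Fintype V] [DecidableEq V]
    (k n : ℕ) (hk : 4 ≤ k) (hn : Fintype.card V = n) (E : Multiset (Finset V))
    (hH : IsCoveringHypergraph E 2 k) (h2 : 2 ≤ Multiset.card E)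
    (hcase : (k = 4 ∧ n = 6) ∨ n ≤ 2 * k - 3) :
    IsEulerian E := by
  obtain ⟨-, hcard, -⟩ := hH
  have hun : ∀ a b : Finset V, (a ∪ b).card ≤ n := fun a b => hn ▸ Finset.card_le_univ _
  have hI : ∀ a ∈ E, ∀ b ∈ E, 2 * k ≤ (a ∩ b).card + n := by
    intro a ha b hb
    have h1 := Finset.card_union_add_card_inter a b
    have := hun a b
    rw [hcard a ha, hcard b hb] at h1
    omega
  induction E using Quot.inductionOn with
  | h l =>
  change IsEulerian (l : Multiset (Finset V))
  have hI' : ∀ a ∈ l, ∀ b ∈ l, 2 * k ≤ (a ∩ b).card + n := hI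
  have hP : ∀ a ∈ l, ∀ b ∈ l, 2 ≤ (a ∩ b).card := by
    intro a ha b hb
    have := hI' a ha b hb
    omega
  have hcard' : ∀ a ∈ l, a.card = k := hcard
  have h2' : 2 ≤ l.length := h2
  clear hI h2 hcard
  match l, h2' with
  | [a, b], _ =>
    obtain ⟨x, hx, y, hy, hxy⟩ := Finset.one_lt_card.mp (hP a (by simp) b (by simp))
    rw [Finset.mem_inter] at hx hy
    exact (HTrail.cons hxy hx.1 hy.1 (HTrail.cons hxy.symm hy.2 hx.2 (HTrail.nil x))).eulerian
  | a :: b :: c :: r, _ =>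
    by_cases h3 : 3 ≤ (a ∩ b).card
    · obtain ⟨x, hx⟩ := Finset.card_pos.mp (lt_of_lt_of_le (by norm_num)
        (hP b (by simp) c (by simp)))
      rw [Finset.mem_inter] at hx
      refine eulerian_of_triple a b c r x hP hx.1 hx.2 ?_
      have := Finset.pred_card_le_card_erase (s := a ∩ b) (a := x)
      omega
    · have hab := hI' a (by simp) b (by simp)
      have hab2 := hP a (by simp) b (by simp)
      have hac := hcard' a (by simp)
      have hbc := hcard' b (by simp)
      have hcc := hcard' c (by simp)
      have hU : a ∪ b = Finset.univ := by
        apply Finset.eq_univ_of_card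
        have h1 := Finset.card_union_add_card_inter a b
        have := hun a b
        omega
      obtain ⟨x, hxc, hx⟩ := Finset.exists_mem_notMem_of_card_lt_card
        (s := a ∩ b) (t := c) (by omega)
      have hxu : x ∈ a ∪ b := hU ▸ Finset.mem_univ x
      rw [Finset.mem_union] at hxu
      rcases hxu with hxa | hxb
      · have h := eulerian_of_triple b a c r x (fun s hs t ht => hP s (by
          simp only [List.mem_cons] at hs ⊢; tauto) t (by
          simp only [List.mem_cons] at ht ⊢; tauto)) hxa hxc (by
          rw [Finset.inter_comm, Finset.erase_eq_of_notMem hx]; exact hab2)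
        rwa [Multiset.coe_eq_coe.mpr (List.Perm.swap a b (c :: r))] at h
      · exact eulerian_of_triple a b c r x hP hxb hxc (by
          rw [Finset.erase_eq_of_notMem hx]; exact hab2)
end

section
/- Let k ≥ 4 and let H be a 2-covering k-hypergraph of order n ≥ k + 1. If n > 3k/2 or k ≥ 7, then H has at least 2·⌊(n + 3)/k⌋ edges (counted with multiplicity). -/
theorem aux_sum {V : Type} [Fintype V] [DecidableEq V] (E : Multiset (Finset V)) (k : ℕ)
    (h : ∀ f ∈ E, f.card = k) :
    ∑ v : V, E.countP (fun f => v ∈ f) = Multiset.card E * k := by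
  induction E using Multiset.induction_on with
  | empty => simp
  | cons a s ih =>
    have h1 := ih (fun f hf => h f (Multiset.mem_cons_of_mem hf))
    have h2 := h a (Multiset.mem_cons_self a s)
    simp only [Multiset.countP_cons, Finset.sum_add_distrib, h1, Multiset.card_cons]
    rw [Finset.sum_boole, Finset.filter_univ_mem, h2]
    simp; ring

theorem aux_deg {V : Type} [Fintype V] [DecidableEq V] (E : Multiset (Finset V)) (k : ℕ)
    (h : IsCoveringHypergraph E 2 k) (v : V) :
    Fintype.card V - 1 ≤ E.countP (fun f => v ∈ f) * (k - 1) := by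
  obtain ⟨-, hk, hc⟩ := h
  have hsub : Finset.univ.erase v ⊆
      (E.filter (fun f => v ∈ f)).toFinset.biUnion (fun f => f.erase v) := by
    intro w hw
    have hne : w ≠ v := Finset.ne_of_mem_erase hw
    obtain ⟨f, hf, hs⟩ := hc {v, w} (Finset.card_pair hne.symm)
    have hv : v ∈ f := hs (by simp)
    have hw' : w ∈ f := hs (by simp)
    simp only [Finset.mem_biUnion, Multiset.mem_toFinset, Multiset.mem_filter, Finset.mem_erase]
    exact ⟨f, ⟨hf, hv⟩, hne, hw'⟩
  have h1 := Finset.card_le_card hsub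
  rw [Finset.card_erase_of_mem (Finset.mem_univ v), Finset.card_univ] at h1
  refine h1.trans ((Finset.card_biUnion_le_card_mul _ _ (k - 1) ?_).trans ?_)
  · intro f hf
    simp only [Multiset.mem_toFinset, Multiset.mem_filter] at hf
    rw [Finset.card_erase_of_mem hf.2, hk f hf.1]
  · rw [Multiset.countP_eq_card_filter]
    exact Nat.mul_le_mul_right _ (Multiset.toFinset_card_le _)

/-- Let `k ≥ 4` and let `H` be a 2-covering `k`-hypergraph of order `n ≥ k + 1`.
If `n > 3k/2` or `k ≥ 7`, then `H` has at least `2⌊(n + 3)/k⌋` edges (counted with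
multiplicity). -/
theorem twoCoveringKHypergraph_edge_lower_bound {V : Type} [Fintype V] [DecidableEq V]
    (k n : ℕ) (hk : 4 ≤ k) (hn : Fintype.card V = n) (hnk : k + 1 ≤ n)
    (E : Multiset (Finset V)) (hH : IsCoveringHypergraph E 2 k)
    (hcase : 3 * k < 2 * n ∨ 7 ≤ k) :
    2 * ((n + 3) / k) ≤ Multiset.card E := by
  have hq : (n + 3) / k * k ≤ n + 3 := Nat.div_mul_le_self _ _
  have hq1 : 1 ≤ (n + 3) / k := (Nat.one_le_div_iff (by omega)).2 (by omega)
  generalize (n + 3) / k = q at hq hq1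
  obtain ⟨r, rfl⟩ : ∃ r, q = r + 1 := ⟨q - 1, by omega⟩
  obtain ⟨j, rfl⟩ : ∃ j, k = j + 4 := ⟨k - 4, by omega⟩
  have hlt : r * (j + 3) < n - 1 := by
    rcases r with _ | r
    · omega
    · have : (r + 1) * (j + 3) + 1 < n := by nlinarith
      omega
  have hdeg : ∀ v : V, r + 1 ≤ E.countP (fun f => v ∈ f) := by
    intro v
    have h := aux_deg E _ hH v
    rw [hn] at h
    have h2 : r * (j + 3) < E.countP (fun f => v ∈ f) * (j + 3) := lt_of_lt_of_le hlt h
    exact Nat.lt_of_mul_lt_mul_right h2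
  have hs : n * (r + 1) ≤ Multiset.card E * (j + 4) := by
    rw [← aux_sum E _ hH.2.1, ← hn]
    have := Finset.card_nsmul_le_sum Finset.univ (fun v : V => E.countP (fun f => v ∈ f)) (r + 1)
      (fun v _ => hdeg v)
    simpa using this
  by_contra hcon
  have hm : Multiset.card E ≤ 2 * r + 1 := by omega
  have hs2 : n * (r + 1) ≤ (2 * r + 1) * (j + 4) := hs.trans (Nat.mul_le_mul_right _ hm)
  rcases r with _ | _ | r
  · omega
  · omega
  · have h3 : ((r + 1 + 1 + 1) * (j + 4)) * (r + 1 + 1 + 1) ≤ (n + 3) * (r + 1 + 1 + 1) :=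
      Nat.mul_le_mul_right _ hq
    ring_nf at h3 hs2
    nlinarith [Nat.zero_le (r * j), Nat.zero_le (r^2 * j), Nat.zero_le (r^2)]
end

section
/- Let n, k, q be positive integers with n ≥ qk. Then for every q-tuple (x_1, …, x_q) of positive integers satisfying x_i ≥ k for all i and x_1 + ⋯ + x_q = n, one has C(x_1, 2) + ⋯ + C(x_q, 2) ≤ (q − 1)·C(k, 2) + C(n − k(q − 1), 2); that is, the tuple (k, …, k, n − k(q − 1)) maximizes Σ_i C(x_i, 2) over all such tuples. -/
theorem aux_choose_add (a b : ℕ) :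
    Nat.choose (a + b) 2 = Nat.choose a 2 + a * b + Nat.choose b 2 := by
  induction b with
  | zero => simp
  | succ b ih =>
    have h1 : Nat.choose (a + b + 1) 2 = (a + b) + Nat.choose (a + b) 2 := by
      rw [Nat.choose_succ_succ' (a + b) 1, Nat.choose_one_right]
    have h2 : Nat.choose (b + 1) 2 = b + Nat.choose b 2 := by
      rw [Nat.choose_succ_succ' b 1, Nat.choose_one_right]
    rw [← add_assoc, h1, h2, ih]
    ring

theorem aux_sum_choose {ι : Type*} (s : Finset ι) (y : ι → ℕ) :
    ∑ i ∈ s, Nat.choose (y i) 2 ≤ Nat.choose (∑ i ∈ s, y i) 2 := by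
  classical
  induction s using Finset.induction_on with
  | empty => simp
  | insert a s ha ih =>
    rw [Finset.sum_insert ha, Finset.sum_insert ha, aux_choose_add]
    have := Nat.zero_le (y a * ∑ i ∈ s, y i)
    omega

/-- Let `n, k, q` be positive integers with `n ≥ qk`.  Then for every `q`-tuple
`(x_1, …, x_q)` of positive integers with `x_i ≥ k` for all `i` and `x_1 + ⋯ + x_q = n`,
one has `C(x_1, 2) + ⋯ + C(x_q, 2) ≤ (q − 1)·C(k, 2) + C(n − k(q − 1), 2)`; that is,
the tuple `(k, …, k, n − k(q − 1))` maximizes `Σᵢ C(xᵢ, 2)` over all such tuples. -/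
theorem sum_choose_two_le_of_constrained (n k q : ℕ) (hn : 0 < n) (hk : 0 < k)
    (hq : 0 < q) (hnk : q * k ≤ n) (x : Fin q → ℕ) (hx0 : ∀ i, 0 < x i)
    (hxk : ∀ i, k ≤ x i) (hsum : ∑ i, x i = n) :
    ∑ i, Nat.choose (x i) 2 ≤ (q - 1) * Nat.choose k 2 + Nat.choose (n - k * (q - 1)) 2 := by
  obtain ⟨y, rfl⟩ : ∃ y : Fin q → ℕ, x = fun i => k + y i :=
    ⟨fun i => x i - k, by
      funext i
      have := hxk i
      dsimp only
      omega⟩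
  obtain ⟨p, rfl⟩ : ∃ p, q = p + 1 := ⟨q - 1, by omega⟩
  have h := aux_sum_choose Finset.univ y
  have hs : n - k * (p + 1 - 1) = k + ∑ i, y i := by
    rw [← hsum, Finset.sum_add_distrib]
    simp only [Finset.sum_const, Finset.card_univ, Fintype.card_fin, smul_eq_mul,
      Nat.add_sub_cancel]
    have : (p + 1) * k = k * p + k := by ring
    omega
  rw [hs, aux_choose_add]
  simp only [aux_choose_add, Finset.sum_add_distrib, ← Finset.mul_sum, Finset.sum_const,
    Finset.card_univ, Fintype.card_fin, smul_eq_mul, Nat.add_sub_cancel]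
  nlinarith
end

section
/- Let G be a connected simple graph with at least two vertices. Then G has at least two vertices that are not cut vertices. Moreover, if G contains a cycle of length k (for some k ≥ 3), then G has at least k vertices that are not cut vertices. -/
/-- `v` is a cut vertex of `G` if deleting `v` (with all incident edges) increases the
number of connected components. -/
def IsCutVertex {V : Type} (G : SimpleGraph V) (v : V) : Prop :=
  Nat.card G.ConnectedComponent <
    Nat.card ((G.induce {u : V | u ≠ v}).ConnectedComponent)


theorem aux_reach {V : Type} (G : SimpleGraph V) (y : V) {a b : V} (p : G.Walk a b)
    (hp : y ∉ p.support) (ha : a ≠ y) (hb : b ≠ y) :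
    (G.induce {u : V | u ≠ y}).Reachable ⟨a, ha⟩ ⟨b, hb⟩ := by
  induction p with
  | nil => exact SimpleGraph.Reachable.refl _
  | @cons u v w h p ih =>
    rw [SimpleGraph.Walk.support_cons, List.mem_cons, not_or] at hp
    have hv : v ≠ y := by
      rintro rfl
      exact hp.2 p.start_mem_support
    have h1 : (G.induce {u : V | u ≠ y}).Adj ⟨u, ha⟩ ⟨v, hv⟩ := by
      simpa using h
    exact h1.reachable.trans (ih hp.2 hv hb)

theorem aux_noncut {V : Type} [Fintype V] (G : SimpleGraph V) (hconn : G.Connected) (y : V)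
    (h : (G.induce {u : V | u ≠ y}).Preconnected) : ¬ IsCutVertex G y := by
  unfold IsCutVertex
  have h1 : Subsingleton (G.induce {u : V | u ≠ y}).ConnectedComponent :=
    h.subsingleton_connectedComponent
  have h2 : Nonempty V := hconn.nonempty
  have h3 : Nonempty G.ConnectedComponent := ⟨G.connectedComponentMk h2.some⟩
  have h4 : 0 < Nat.card G.ConnectedComponent := Nat.card_pos
  have h5 := Finite.card_le_one_iff_subsingleton.2 h1
  omega

theorem aux_main {V : Type} [Fintype V] [DecidableEq V] (G : SimpleGraph V)
    (hconn : G.Connected) (C : Finset V)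
    (hC : ∀ y, ∀ a ∈ C, ∀ b ∈ C, a ≠ y → b ≠ y → ∃ p : G.Walk a b, y ∉ p.support) :
    C.card ≤ Nat.card {v : V // ¬ IsCutVertex G v} := by
  have key : ∀ x : C, ∃ y : {v : V // ¬ IsCutVertex G v},
      ∀ c ∈ C, ∀ p : G.Walk y.1 c, x.1 ∈ p.support := by
    rintro ⟨x, hx⟩
    classical
    let A : Finset V := Finset.univ.filter fun y => ∀ c ∈ C, ∀ p : G.Walk y c, x ∈ p.support
    have hA : A.Nonempty := ⟨x, by simp [A]⟩
    obtain ⟨y, hyA, hmax⟩ := A.exists_max_image (fun y => G.dist y x) hA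
    have hy : ∀ c ∈ C, ∀ p : G.Walk y c, x ∈ p.support := by simpa [A] using hyA
    have hz : ∀ z, z ≠ y → ∃ c ∈ C, c ≠ y ∧ ∃ p : G.Walk z c, y ∉ p.support := by
      intro z hzy
      by_cases hzA : z ∈ A
      · have hd := hmax z hzA
        obtain ⟨p, hp⟩ := hconn.exists_walk_length_eq_dist z x
        have hyp : y ∉ p.support := by
          intro hm
          have e := congrArg SimpleGraph.Walk.length (p.take_spec hm)
          rw [SimpleGraph.Walk.length_append] at e
          have e2 := SimpleGraph.dist_le (p.dropUntil y hm)
          have e3 : (p.takeUntil y hm).length = 0 := by omega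
          exact hzy (SimpleGraph.Walk.eq_of_length_eq_zero e3)
        refine ⟨x, hx, ?_, p, hyp⟩
        rintro rfl
        exact hyp p.end_mem_support
      · have : ∃ c ∈ C, ∃ p : G.Walk z c, x ∉ p.support := by
          simpa [A] using hzA
        obtain ⟨c, hc, p, hp⟩ := this
        have hyp : y ∉ p.support := by
          intro hm
          exact hp (p.support_dropUntil_subset_support hm (hy c hc (p.dropUntil y hm)))
        refine ⟨c, hc, ?_, p, hyp⟩
        rintro rfl
        exact hyp p.end_mem_support
    refine ⟨⟨y, aux_noncut G hconn y ?_⟩, hy⟩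
    rintro ⟨a, ha⟩ ⟨b, hb⟩
    obtain ⟨c, hc, hcy, p, hp⟩ := hz a ha
    obtain ⟨d, hd, hdy, q, hq⟩ := hz b hb
    obtain ⟨r, hr⟩ := hC y c hc d hd hcy hdy
    exact (aux_reach G y p hp ha hcy).trans
      ((aux_reach G y r hr hcy hdy).trans (aux_reach G y q hq hb hdy).symm)
  choose f hf using key
  have hlt : ∀ x x' : C, x ≠ x' → f x = f x' → G.dist (f x).1 x'.1 < G.dist (f x).1 x.1 := by
    intro x x' hne he
    obtain ⟨p, hp⟩ := hconn.exists_walk_length_eq_dist (f x).1 x.1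
    have hm : x'.1 ∈ p.support := by
      have := hf x' x.1 x.2
      rw [← he] at this
      exact this p
    have e := congrArg SimpleGraph.Walk.length (p.take_spec hm)
    rw [SimpleGraph.Walk.length_append] at e
    have e2 := SimpleGraph.dist_le (p.takeUntil _ hm)
    have e3 : (p.dropUntil _ hm).length ≠ 0 := by
      intro h0
      exact hne (Subtype.ext (SimpleGraph.Walk.eq_of_length_eq_zero h0).symm)
    omega
  have hinj : Function.Injective f := by
    intro x x' he
    by_contra hne
    have h1 := hlt x x' hne he
    have h2 := hlt x' x (Ne.symm hne) he.symm
    rw [← he] at h2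
    omega
  have := Nat.card_le_card_of_injective f hinj
  simpa using this

theorem aux_cycle {V : Type} [DecidableEq V] (G : SimpleGraph V) {u : V} (c : G.Walk u u)
    (hc : c.IsCycle) (y a b : V) (ha : a ∈ c.support) (hb : b ∈ c.support)
    (hay : a ≠ y) (hby : b ≠ y) : ∃ p : G.Walk a b, y ∉ p.support := by
  have comb : ∀ w, (∀ z ∈ c.support, z ≠ y → ∃ p : G.Walk w z, y ∉ p.support) →
      ∃ p : G.Walk a b, y ∉ p.support := by
    intro w h
    obtain ⟨p, hp⟩ := h a ha hay
    obtain ⟨q, hq⟩ := h b hb hby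
    refine ⟨p.reverse.append q, ?_⟩
    rw [SimpleGraph.Walk.mem_support_append_iff, SimpleGraph.Walk.support_reverse,
      List.mem_reverse]
    tauto
  by_cases hy : y ∈ c.support
  · have hr := hc.rotate hy
    have hs : ∀ z, z ∈ c.support → z ∈ (c.rotate y hy).support := by
      intro z hz
      simpa using hz
    generalize c.rotate y hy = c' at hr hs
    cases c' with
    | nil => exact absurd hr (by simp)
    | @cons _ w _ h p =>
      rw [SimpleGraph.Walk.cons_isCycle_iff] at hr
      refine comb w fun z hz hzy => ?_
      have hzp : z ∈ p.support := by
        have := hs z hz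
        rw [SimpleGraph.Walk.support_cons, List.mem_cons] at this
        tauto
      exact ⟨p.takeUntil z hzp,
        SimpleGraph.Walk.endpoint_notMem_support_takeUntil hr.1 hzp hzy.symm⟩
  · exact comb u fun z hz _ => ⟨c.takeUntil z hz, fun h => hy (c.support_takeUntil_subset_support hz h)⟩

/-- Let `G` be a connected simple graph with at least two vertices.  Then `G` has at
least two vertices that are not cut vertices; moreover, if `G` contains a cycle of
length `k`, then `G` has at least `k` vertices that are not cut vertices. -/
theorem two_non_cut_vertices {V : Type} [Fintype V] [DecidableEq V]
    (G : SimpleGraph V) (hconn : G.Connected) (h2 : 2 ≤ Fintype.card V) :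
    2 ≤ Nat.card {v : V // ¬ IsCutVertex G v} ∧
      ∀ (k : ℕ) (u : V) (c : G.Walk u u), c.IsCycle → c.length = k →
        k ≤ Nat.card {v : V // ¬ IsCutVertex G v} := by
  constructor
  · have : Nontrivial V := Fintype.one_lt_card_iff_nontrivial.1 h2
    obtain ⟨a⟩ := hconn.nonempty
    obtain ⟨b, hab⟩ := hconn.preconnected.exists_adj_of_nontrivial a
    have := aux_main G hconn {a, b} (by
      intro y s hs t ht hsy hty
      simp only [Finset.mem_insert, Finset.mem_singleton] at hs ht
      rcases hs with rfl | rfl <;> rcases ht with rfl | rfl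
      · exact ⟨SimpleGraph.Walk.nil, by simpa using hsy.symm⟩
      · exact ⟨hab.toWalk, by simpa using ⟨hsy.symm, hty.symm⟩⟩
      · exact ⟨hab.symm.toWalk, by simpa using ⟨hsy.symm, hty.symm⟩⟩
      · exact ⟨SimpleGraph.Walk.nil, by simpa using hsy.symm⟩)
    rwa [Finset.card_pair hab.ne] at this
  · intro k u c hc hk
    have := aux_main G hconn c.support.tail.toFinset (by
      intro y a ha b hb hay hby
      exact aux_cycle G c hc y a b (List.mem_of_mem_tail (List.mem_toFinset.1 ha))
        (List.mem_of_mem_tail (List.mem_toFinset.1 hb)) hay hby)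
    rw [List.toFinset_card_of_nodup hc.support_nodup] at this
    simpa [hk] using this
end
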